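/- Every legal schedule W = (w_1,...,w_{k-1}) is tame: the polynomial Q_W(x;q) satisfies the functional equation (1-q/x)Q_W(x;q) + x^k(1-qx)Q_W(1/x;q) = (1+x^k)(1-q^2)Π_{i=1}^{k-1}[w_i]_q. -/

import Mathlib

open Polynomial Finset

noncomputable section

abbrev K : Type := RatFunc ℚ

def qq : K := RatFunc.X

def qint (q : K) (n : ℕ) : K := ∑ i ∈ Finset.range n, q ^ i

def Legal (W : List ℕ) : Prop :=
  (∀ h : W ≠ [], 1 ≤ W.head h ∧ W.head h ≤ 2) ∧
    List.Chain' (fun a b => 1 ≤ b ∧ b ≤ a + 1) W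

def Prev (q : K) : List ℕ → MvPolynomial ℤ K
  | [] => MvPolynomial.C q * MvPolynomial.X (-1) + MvPolynomial.X 0
  | w :: V =>
      MvPolynomial.C ((1 - q)⁻¹) *
        ((MvPolynomial.X ((V.length : ℤ) + 1) - MvPolynomial.C (q ^ w)) * Prev q V +
          (1 - MvPolynomial.X ((V.length : ℤ) + 1)) *
            MvPolynomial.aeval
              (fun j : ℤ =>
                if (V.length : ℤ) + 1 - (w : ℤ) ≤ j ∧ j ≤ (V.length : ℤ) then
                  MvPolynomial.C q * MvPolynomial.X j
                else MvPolynomial.X j)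
              (Prev q V))

def Psched (q : K) (W : List ℕ) : MvPolynomial ℤ K := Prev q W.reverse

def Qsched (q : K) (W : List ℕ) : Polynomial K :=
  MvPolynomial.aeval (fun _ : ℤ => (Polynomial.X : Polynomial K)) (Psched q W)

def TameFE (q : K) (W : List ℕ) : Prop :=
  ∀ x : K, x ≠ 0 →
    (1 - q / x) * (Qsched q W).eval x +
        x ^ (W.length + 1) * (1 - q * x) * (Qsched q W).eval x⁻¹ =
      (1 + x ^ (W.length + 1)) * ((1 - q ^ 2) * (W.map (qint q)).prod)

/-!
A window of `P_{W,w}` consists of the variables `x_j` with `k - w ≤ j < k`, and these are the last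
variables of `P_W`; hence it may be scaled by the operator that scales every `x_j` with
`k - w ≤ j`. All these operators commute, and only the values of `P_W` on the orbits of
`(x, x, …)` and `(1/x, 1/x, …)` matter.

The functional equation is deformed by a list `S` of window starts: a kernel `K_S`, a polynomial in
the corresponding scalings, acts on `P_W` at `(x, x, …)`, a reciprocal version of it acts at
`(1/x, 1/x, …)`, and its values with the scalings replaced by numbers multiply the product of the
`[w_i]_q`. Each of the four resulting terms obeys the same two recurrences: one trades the last
entry `w` of the schedule for a new window start `k - w` at the head of `S`, the other drops from
the end of `S` a window that lies beyond all the variables. Legality of the schedule is exactly what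
keeps `S` sorted, so everything reduces to `P_∅` and sorted lists `S` with entries in `{-1, 0}`.
-/

section ScalingKernel

variable {R A B ι : Type*} [CommRing R] [CommRing A] [Algebra R A] [CommRing B] [Algebra R B]

/-- The kernel `K_S(y)` through which the functional equation is propagated along a schedule. For
`S = [a_1, …, a_n]` it is the sum over the subsets `I` of `{1, …, n}`, with `m = |I|`, of
`q ^ inv I * y ^ m * (∏ i < m, (1 - x * q ^ i)) * ∏ i < n - m, (x - q ^ i)` times
`∏ p ∈ I, u a_p * ∏ p ∉ I, t a_p`, where `inv I` counts the `p < p'` with `p ∉ I` and `p' ∈ I`. -/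
def scalingKernel (x q : R) (t u : ι → A) : List ι → R → A
  | [], _ => 1
  | a :: S, y =>
      x • (t a - y • u a) * scalingKernel x q t u S (q * y) +
        (y • u a - q ^ S.length • t a) * scalingKernel x q t u S y

variable (x q : R) {t u t' u' : ι → A}

theorem scalingKernel_cons (a : ι) (S : List ι) (y : R) :
    scalingKernel x q t u (a :: S) y =
      x • (t a - y • u a) * scalingKernel x q t u S (q * y) +
        (y • u a - q ^ S.length • t a) * scalingKernel x q t u S y :=
  rfl

theorem scalingKernel_congr {S : List ι} (ht : ∀ a ∈ S, t a = t' a) (hu : ∀ a ∈ S, u a = u' a)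
    (y : R) : scalingKernel x q t u S y = scalingKernel x q t' u' S y := by
  induction S generalizing y with
  | nil => rfl
  | cons a S ih =>
    rw [List.forall_mem_cons] at ht hu
    rw [scalingKernel_cons, scalingKernel_cons, ht.1, hu.1, ih ht.2 hu.2, ih ht.2 hu.2]

theorem map_scalingKernel (φ : A →ₐ[R] B) (S : List ι) (y : R) :
    φ (scalingKernel x q t u S y) = scalingKernel x q (φ ∘ t) (φ ∘ u) S y := by
  induction S generalizing y with
  | nil => exact map_one φ
  | cons a S ih => simp only [scalingKernel_cons, map_add, map_sub, map_mul, map_smul, ih,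
      Function.comp_apply]

theorem scalingKernel_smul_right (c : R) (S : List ι) (y : R) :
    scalingKernel x q t (c • u) S y = scalingKernel x q t u S (c * y) := by
  induction S generalizing y with
  | nil => rfl
  | cons a S ih =>
    simp only [scalingKernel_cons, ih, Pi.smul_apply, smul_smul, mul_comm y c, mul_left_comm q c y]

theorem scalingKernel_mul_mul (c : ι → A) (S : List ι) (y : R) :
    scalingKernel x q (c * t) (c * u) S y = (S.map c).prod * scalingKernel x q t u S y := by
  induction S generalizing y with
  | nil => simp [scalingKernel]
  | cons a S ih =>
    simp only [scalingKernel_cons, ih, Pi.mul_apply, List.map_cons, List.prod_cons,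
      Algebra.smul_def]
    ring

theorem scalingKernel_smul_smul (c : R) (S : List ι) (y : R) :
    scalingKernel x q (c • t) (c • u) S y = c ^ S.length • scalingKernel x q t u S y := by
  have h := scalingKernel_mul_mul x q (t := t) (u := u) (fun _ => algebraMap R A c) S y
  simpa [Algebra.smul_def, Pi.mul_def, Pi.smul_def] using h

theorem scalingKernel_append_singleton (S : List ι) (a : ι) (y : R) :
    scalingKernel x q t u (S ++ [a]) (q * y) =
      x • (t a - (q ^ S.length * (q * y)) • u a) * scalingKernel x q t u S (q * y) +
        q ^ S.length • ((q * y) • u a - t a) * scalingKernel x q t u S y := by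
  induction S generalizing y with
  | nil =>
    simp only [scalingKernel, List.nil_append, List.length_nil, Algebra.smul_def, map_mul, map_pow]
    ring
  | cons b S ih =>
    simp only [List.cons_append, scalingKernel_cons, ih, List.length_append, List.length_cons,
      List.length_nil, Algebra.smul_def, map_mul, map_pow]
    ring

theorem sub_smul_dvd_scalingKernel_append_singleton_sub (S : List ι) (a : ι) (y : R) :
    t a - y • u a ∣ scalingKernel x q t u (S ++ [a]) y -
      (x * (1 - q ^ S.length)) • (t a * scalingKernel x q t u S y) := by
  induction S with
  | nil =>
    refine ⟨algebraMap R A x - 1, ?_⟩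
    simp only [scalingKernel, List.nil_append, List.length_nil, Algebra.smul_def, map_mul, map_sub,
      map_one, map_pow]
    ring
  | cons b S ih =>
    obtain ⟨E, hE⟩ := ih
    refine ⟨(x * q ^ (S.length + 1)) • (t b - y • u b) *
      (x • scalingKernel x q t u S (q * y) - scalingKernel x q t u S y) +
      (y • u b - q ^ (S.length + 1) • t b) * E, ?_⟩
    simp only [List.cons_append, scalingKernel_cons, scalingKernel_append_singleton,
      sub_eq_iff_eq_add.1 hE, List.length_append, List.length_cons, List.length_nil,
      Algebra.smul_def, map_mul, map_pow, map_sub, map_one]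
    ring

theorem scalingKernel_append_singleton_of_smul_eq {a : ι} {y : R} (h : y • u a = t a)
    (S : List ι) :
    scalingKernel x q t u (S ++ [a]) y =
      (x * (1 - q ^ S.length)) • (t a * scalingKernel x q t u S y) := by
  have h_dvd := sub_smul_dvd_scalingKernel_append_singleton_sub x q (t := t) (u := u) S a y
  rwa [h, sub_self, zero_dvd_iff, sub_eq_zero] at h_dvd

theorem scalingKernel_one_one_eq_zero {S : List ι} (hS : S ≠ []) :
    scalingKernel x q (1 : ι → A) 1 S 1 = 0 := by
  induction S with
  | nil => exact absurd rfl hS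
  | cons a S ih =>
    rcases eq_or_ne S [] with rfl | hS'
    · simp [scalingKernel]
    · simp [scalingKernel_cons, ih hS']

theorem scalingKernel_one_one_replicate (n : ℕ) (a : ι) :
    scalingKernel x q (1 : ι → R) 1 (List.replicate n a) q *
        ((x - q) + q ^ n * (1 - q * x)) =
      (1 - q) * (x * scalingKernel x q (1 : ι → R) 1 (List.replicate n a) (q * q) +
        q ^ n * scalingKernel x q (1 : ι → R) 1 (List.replicate n a) 1) := by
  have h_append := scalingKernel_append_singleton x q (t := (1 : ι → R)) (u := 1)
    (List.replicate n a) a 1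
  rw [← List.replicate_succ', List.replicate_succ, scalingKernel_cons] at h_append
  simp only [mul_one, List.length_replicate, Pi.one_apply, smul_eq_mul] at h_append
  linear_combination -h_append

end ScalingKernel

section WindowWeight

variable {R : Type*} [CommRing R]

/-- The weight `q ^ v` of a window of length `v = k - a` starting at the index `a`, as a function
of `a ≤ k`. -/
def windowWeight (q : R) (k a : ℤ) : R :=
  q ^ (k - a).toNat

theorem windowWeight_self (q : R) (k : ℤ) : windowWeight q k k = 1 := by
  simp [windowWeight]

theorem windowWeight_sub_natCast (q : R) (k : ℤ) (w : ℕ) : windowWeight q k (k - w) = q ^ w := by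
  simp [windowWeight]

theorem windowWeight_add_one (q : R) {k a : ℤ} (h : a ≤ k) :
    windowWeight q (k + 1) a = q * windowWeight q k a := by
  rw [windowWeight, windowWeight, ← pow_succ']
  congr 1
  omega

theorem scalingKernel_windowWeight_add_one {A : Type*} [CommRing A] [Algebra R A] (x q : R)
    (t : ℤ → A) {k : ℤ} {S : List ℤ} (hS : ∀ a ∈ S, a ≤ k) (y : R) :
    scalingKernel x q t (algebraMap R A ∘ windowWeight q (k + 1)) S y =
      scalingKernel x q t (algebraMap R A ∘ windowWeight q k) S (q * y) := by
  rw [← scalingKernel_smul_right]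
  refine scalingKernel_congr x q (fun _ _ => rfl) (fun a ha => ?_) y
  simp [windowWeight_add_one q (hS a ha), Algebra.smul_def]

theorem scalingKernel_one_windowWeight_add_one (x q : R) {k : ℤ} {S : List ℤ}
    (hS : ∀ a ∈ S, a ≤ k) (y : R) :
    scalingKernel x q 1 (windowWeight q (k + 1)) S y =
      scalingKernel x q 1 (windowWeight q k) S (q * y) :=
  scalingKernel_windowWeight_add_one x q 1 hS y

theorem scalingKernel_windowWeight_zero_replicate (x q : R) (n : ℕ) (y : R) :
    scalingKernel x q 1 (windowWeight q 0) (List.replicate n (-1)) y =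
      scalingKernel x q 1 (1 : ℤ → R) (List.replicate n (-1)) (q * y) := by
  rw [← scalingKernel_smul_right]
  refine scalingKernel_congr x q (fun _ _ => rfl) (fun a ha => ?_) y
  simp [List.eq_of_mem_replicate ha, windowWeight]

theorem prod_windowWeight_sub_one_mul_scalingKernel (x q : R) (k : ℤ) (S : List ℤ) :
    ((S.map (windowWeight q k)).prod - 1) * scalingKernel x q 1 (1 : ℤ → R) S 1 = 0 := by
  rcases eq_or_ne S [] with rfl | hS
  · simp
  · rw [scalingKernel_one_one_eq_zero x q hS, mul_zero]

theorem scalingKernel_append_singleton_zero_one (x q : R) {u : ℤ → R} (hu : u 0 = 1) (S : List ℤ) :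
    scalingKernel x q 1 u (S ++ [0]) 1 = x * (1 - q ^ S.length) * scalingKernel x q 1 u S 1 := by
  simpa using scalingKernel_append_singleton_of_smul_eq x q (t := 1) (u := u) (a := 0) (y := 1)
    (by simp [hu]) S

theorem scalingKernel_append_singleton_zero_self (x q : R) {u : ℤ → R} (hu : u 0 = 1)
    (S : List ℤ) :
    scalingKernel x q 1 u (S ++ [0]) q =
      x * (1 - q ^ (S.length + 1)) * scalingKernel x q 1 u S q +
        q ^ S.length * (q - 1) * scalingKernel x q 1 u S 1 := by
  simpa [hu, pow_succ] using scalingKernel_append_singleton x q (t := 1) (u := u) S 0 1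

theorem scalingKernel_base_identity_replicate (x q : R) (n : ℕ) :
    scalingKernel x q 1 (1 : ℤ → R) (List.replicate n (-1)) q *
          ((x - q) + q * ((List.replicate n (-1)).map (windowWeight q 0)).prod * (1 - q * x)) +
        scalingKernel x q 1 (windowWeight q 0) (List.replicate n (-1)) 1 *
          (q * (x - q) + q ^ (List.replicate n (-1 : ℤ)).length * (1 - q * x)) =
      (1 - q ^ 2) * (x * scalingKernel x q 1 (windowWeight q 0) (List.replicate n (-1)) q +
        scalingKernel x q 1 (1 : ℤ → R) (List.replicate n (-1)) 1) := by
  have h_weight : windowWeight q 0 (-1) = q := by simp [windowWeight]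
  have h_const := scalingKernel_one_one_replicate x q n (-1 : ℤ)
  have h_prod := prod_windowWeight_sub_one_mul_scalingKernel x q 0 (List.replicate n (-1))
  rw [scalingKernel_windowWeight_zero_replicate, scalingKernel_windowWeight_zero_replicate, mul_one]
  simp only [List.map_replicate, List.prod_replicate, List.length_replicate, h_weight] at h_prod ⊢
  linear_combination (1 + q) * h_const + (1 - q ^ 2) * h_prod

theorem scalingKernel_base_identity (x q : R) {S : List ℤ}
    (hS : ((-1) :: S).Pairwise (· ≤ ·)) (hS0 : ∀ a ∈ S, a ≤ 0) :
    scalingKernel x q 1 (1 : ℤ → R) S q *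
          ((x - q) + q * (S.map (windowWeight q 0)).prod * (1 - q * x)) +
        scalingKernel x q 1 (windowWeight q 0) S 1 *
          (q * (x - q) + q ^ S.length * (1 - q * x)) =
      (1 - q ^ 2) * (x * scalingKernel x q 1 (windowWeight q 0) S q +
        scalingKernel x q 1 (1 : ℤ → R) S 1) := by
  induction S using List.reverseRecOn with
  | nil =>
    simp only [scalingKernel, List.map_nil, List.prod_nil, List.length_nil]
    ring
  | append_singleton S a ih =>
    rw [← List.cons_append, List.pairwise_append] at hS
    obtain ⟨hS, -, hle⟩ := hS
    rw [List.forall_mem_append, List.forall_mem_singleton] at hS0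
    have h_neg_one_le : -1 ≤ a := hle (-1) (by simp) a (by simp)
    obtain rfl | rfl : a = 0 ∨ a = -1 := by omega
    · have h_weight := windowWeight_self q 0
      have h_prod := prod_windowWeight_sub_one_mul_scalingKernel x q 0 S
      rw [scalingKernel_append_singleton_zero_one x q (u := 1) rfl,
        scalingKernel_append_singleton_zero_one x q h_weight,
        scalingKernel_append_singleton_zero_self x q (u := 1) rfl,
        scalingKernel_append_singleton_zero_self x q h_weight]
      simp only [List.map_append, List.map_singleton, List.prod_append, List.prod_singleton,
        h_weight, List.length_append, List.length_singleton]
      linear_combination x * (1 - q ^ (S.length + 1)) * ih hS hS0.1 +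
        q ^ S.length * (q - 1) * q * (1 - q * x) * h_prod
    · have h_replicate : S ++ [-1] = List.replicate (S.length + 1) (-1) := by
        refine List.eq_replicate_iff.2 ⟨by simp, fun b hb => ?_⟩
        obtain hb | rfl := (List.mem_append.1 hb).imp_right List.mem_singleton.1
        · exact le_antisymm (hle b (List.mem_cons_of_mem _ hb) (-1) (by simp))
            ((List.pairwise_cons.1 hS).1 b hb)
        · rfl
      rw [h_replicate]
      exact scalingKernel_base_identity_replicate x q (S.length + 1)

end WindowWeight

section Scalings

variable {R : Type*} [CommRing R]

/-- The vector scaling all variables of index at least `a` by `q`. On a polynomial in the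
`x_j` with `j ≤ k` it acts as the scaling of the window `a ≤ j ≤ k`, whatever `k` is. -/
def suffixScaling (q : R) (a : ℤ) : ℤ → R :=
  fun j => if a ≤ j then q else 1

theorem suffixScaling_of_le (q : R) {a j : ℤ} (h : a ≤ j) : suffixScaling q a j = q :=
  if_pos h

theorem suffixScaling_of_lt (q : R) {a j : ℤ} (h : j < a) : suffixScaling q a j = 1 :=
  if_neg h.not_ge

theorem suffixScaling_apply_neg_one (q : R) {a : ℤ} (h : -1 ≤ a) (h0 : a ≤ 0) :
    suffixScaling q a (-1) = windowWeight q 0 a := by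
  obtain rfl | rfl : a = -1 ∨ a = 0 := by omega
  all_goals simp [suffixScaling, windowWeight]

/-- The scaling of all variables of index at least `a`, as an element of the monoid algebra of the
scalings of the variables. -/
def suffixOperator (q : R) (a : ℤ) : MonoidAlgebra R (ℤ → R) :=
  MonoidAlgebra.of R (ℤ → R) (suffixScaling q a)

variable (R) in
/-- The character by which scalings act on the variable `x_j`. -/
def scalingCharacter (j : ℤ) : MonoidAlgebra R (ℤ → R) →ₐ[R] R :=
  MonoidAlgebra.lift R R (ℤ → R) (Pi.evalMonoidHom (fun _ => R) j)

variable (R) in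
/-- The conjugation of scalings by the multiplication by the variable `x_j`. -/
def scalingTwist (j : ℤ) :
    MonoidAlgebra R (ℤ → R) →ₐ[R] MonoidAlgebra R (ℤ → R) :=
  MonoidAlgebra.lift R (MonoidAlgebra R (ℤ → R)) (ℤ → R)
    { toFun := fun c => c j • MonoidAlgebra.of R (ℤ → R) c
      map_one' := by rw [map_one, Pi.one_apply, one_smul]
      map_mul' := fun c d => by rw [map_mul, smul_mul_smul_comm, Pi.mul_apply] }

theorem scalingCharacter_suffixOperator (q : R) (j a : ℤ) :
    scalingCharacter R j (suffixOperator q a) = suffixScaling q a j := by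
  simp [scalingCharacter, suffixOperator]

theorem scalingTwist_of (j : ℤ) (c : ℤ → R) :
    scalingTwist R j (MonoidAlgebra.of R (ℤ → R) c) = c j • MonoidAlgebra.of R (ℤ → R) c := by
  simp [scalingTwist]

theorem scalingTwist_suffixOperator (q : R) {j a : ℤ} (h : a ≤ j) :
    scalingTwist R j (suffixOperator q a) = q • suffixOperator q a := by
  rw [suffixOperator, scalingTwist_of, suffixScaling_of_le q h]

theorem scalingTwist_scalingKernel_one_suffixOperator (x q : R) {k : ℤ} {S : List ℤ}
    (hS : ∀ a ∈ S, a ≤ k) (y : R) :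
    scalingTwist R k (scalingKernel x q 1 (suffixOperator q) S y) =
      scalingKernel x q 1 (suffixOperator q) S (q * y) := by
  rw [map_scalingKernel, ← scalingKernel_smul_right]
  exact scalingKernel_congr x q (fun _ _ => map_one _)
    (fun a ha => scalingTwist_suffixOperator q (hS a ha)) y

theorem scalingTwist_scalingKernel_suffixOperator (x q : R) {k : ℤ} {S : List ℤ} (c : ℤ → R)
    (hS : ∀ a ∈ S, a ≤ k) (y : R) :
    scalingTwist R k (scalingKernel x q (suffixOperator q) (algebraMap R _ ∘ c) S (q * y)) =
      q ^ S.length • scalingKernel x q (suffixOperator q) (algebraMap R _ ∘ c) S y := by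
  rw [map_scalingKernel, ← scalingKernel_smul_right, ← scalingKernel_smul_smul]
  refine scalingKernel_congr x q (fun a ha => scalingTwist_suffixOperator q (hS a ha))
    (fun a _ => congrArg (q • ·) ((scalingTwist R k).commutes (c a))) y

end Scalings

section ScheduleEval

variable {F : Type*} [Field F]

/-- The value at `ρ` of the polynomial `P_W`, where `V` lists `W` from its last entry to its
first. -/
def scheduleEval (q : F) : List ℕ → (ℤ → F) → F
  | [], ρ => q * ρ (-1) + ρ 0
  | w :: V, ρ =>
      (1 - q)⁻¹ * ((ρ (V.length + 1) - q ^ w) * scheduleEval q V ρ +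
        (1 - ρ (V.length + 1)) *
          scheduleEval q V (suffixScaling q (V.length + 1 - w) * ρ))

theorem scheduleEval_congr (q : F) (V : List ℕ) {ρ ρ' : ℤ → F}
    (h : ∀ j : ℤ, j ≤ V.length → ρ j = ρ' j) : scheduleEval q V ρ = scheduleEval q V ρ' := by
  induction V generalizing ρ ρ' with
  | nil => simp [scheduleEval, h]
  | cons w V ih =>
    have hV : ∀ j : ℤ, j ≤ V.length → ρ j = ρ' j := fun j hj => h j (by grind)
    have hk : ρ (V.length + 1) = ρ' (V.length + 1) := h _ (by simp)
    have h_scaled := ih fun j hj => congrArg (suffixScaling q (V.length + 1 - w) j * ·) (hV j hj)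
    rw [scheduleEval, scheduleEval, hk, ih hV]
    exact congrArg _ (congrArg _ (congrArg _ h_scaled))

theorem eval_Prev (q : K) (V : List ℕ) (ρ : ℤ → K) :
    MvPolynomial.eval ρ (Prev q V) = scheduleEval q V ρ := by
  induction V generalizing ρ with
  | nil => simp [Prev, scheduleEval]
  | cons w V ih =>
    rw [Prev, scheduleEval]
    simp only [map_mul, map_add, map_sub, map_one, MvPolynomial.eval_C, MvPolynomial.eval_X, ih,
      ← MvPolynomial.aeval_eq_eval, MvPolynomial.comp_aeval_apply]
    simp only [MvPolynomial.aeval_eq_eval, ih]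
    congr 3
    refine scheduleEval_congr q V fun j hj => ?_
    simp only [Pi.mul_apply, suffixScaling, hj, and_true]
    split_ifs <;> simp

theorem eval_Qsched (q : K) (W : List ℕ) (x : K) :
    (Qsched q W).eval x = scheduleEval q W.reverse (fun _ => x) := by
  rw [← eval_Prev, Qsched, Psched, ← Polynomial.coe_aeval_eq_eval, MvPolynomial.comp_aeval_apply,
    ← MvPolynomial.aeval_eq_eval]
  simp

end ScheduleEval

section OrbitEval

variable {F : Type*} [Field F]

/-- The value at `ρ` of the polynomial obtained from `P_W` by applying a linear combination of
scalings, where `V` is the reverse of `W`. -/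
def orbitEval (q : F) (V : List ℕ) (ρ : ℤ → F) : MonoidAlgebra F (ℤ → F) →ₗ[F] F :=
  Finsupp.linearCombination F (fun c => scheduleEval q V (c * ρ)) ∘ₗ
    (MonoidAlgebra.coeffLinearEquiv F).toLinearMap

theorem orbitEval_of (q : F) (V : List ℕ) (ρ c : ℤ → F) :
    orbitEval q V ρ (MonoidAlgebra.of F (ℤ → F) c) = scheduleEval q V (c * ρ) := by
  simp [orbitEval]

theorem orbitEval_one (q : F) (V : List ℕ) (ρ : ℤ → F) :
    orbitEval q V ρ 1 = scheduleEval q V ρ := by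
  rw [← map_one (MonoidAlgebra.of F (ℤ → F)), orbitEval_of, one_mul]

theorem orbitEval_nil (q : F) (ρ : ℤ → F) (κ : MonoidAlgebra F (ℤ → F)) :
    orbitEval q [] ρ κ =
      q * ρ (-1) * scalingCharacter F (-1) κ + ρ 0 * scalingCharacter F 0 κ := by
  induction κ using MonoidAlgebra.induction_on with
  | of c =>
    rw [orbitEval_of]
    simp only [scheduleEval, scalingCharacter, MonoidAlgebra.lift_of, Pi.evalMonoidHom_apply,
      Pi.mul_apply]
    ring
  | add κ κ' h h' =>
    simp only [map_add, h, h']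
    ring
  | smul r κ h =>
    simp only [map_smul, h, smul_eq_mul]
    ring

theorem orbitEval_cons {q : F} (hq : q ≠ 1) (w : ℕ) (V : List ℕ) (ρ : ℤ → F)
    (κ : MonoidAlgebra F (ℤ → F)) :
    (1 - q) * orbitEval q (w :: V) ρ κ =
      ρ (V.length + 1) * orbitEval q V ρ
          ((1 - suffixOperator q (V.length + 1 - w)) * scalingTwist F (V.length + 1) κ) +
        orbitEval q V ρ ((suffixOperator q (V.length + 1 - w) - (q ^ w) • 1) * κ) := by
  induction κ using MonoidAlgebra.induction_on with
  | of c =>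
    rw [orbitEval_of, scheduleEval, mul_inv_cancel_left₀ (sub_ne_zero.2 hq.symm)]
    simp only [scalingTwist_of, suffixOperator, sub_mul, one_mul, mul_smul_comm, smul_mul_assoc,
      map_sub, map_smul, ← map_mul, orbitEval_of, mul_assoc, smul_eq_mul, Pi.mul_apply]
    ring
  | add κ κ' h h' =>
    simp only [map_add, mul_add, h, h']
    ring
  | smul r κ h =>
    simp only [map_smul, mul_smul_comm, smul_eq_mul, mul_left_comm _ r, h]
    ring

theorem orbitEval_suffixOperator_mul (q : F) {V : List ℕ} {a : ℤ} (h : V.length < a) (ρ : ℤ → F)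
    (κ : MonoidAlgebra F (ℤ → F)) :
    orbitEval q V ρ (suffixOperator q a * κ) = orbitEval q V ρ κ := by
  induction κ using MonoidAlgebra.induction_on with
  | of c =>
    rw [suffixOperator, ← map_mul, orbitEval_of, orbitEval_of]
    refine scheduleEval_congr q V fun j hj => ?_
    simp [suffixScaling_of_lt q (hj.trans_lt h)]
  | add κ κ' h h' => rw [mul_add, map_add, map_add, h, h']
  | smul r κ h => rw [mul_smul_comm, map_smul, map_smul, h]

end OrbitEval

section Propagation

variable {R : Type*} [CommRing R]

/-- The families `D V S`, indexed by a reversed schedule `V` and a list `S` of starting indices of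
windows, that obey the recurrences shared by both sides of the functional equation. -/
def transferSpace (x q : R) : Submodule R (List ℕ → List ℤ → R) where
  carrier := {D |
    (∀ V S, D V (S ++ [(V.length + 1 : ℤ)]) = x * (1 - q ^ S.length) * D V S) ∧
    ∀ (w : ℕ) V S, (∀ a ∈ S, a ≤ (V.length + 1 : ℤ)) →
      (1 - q) * D (w :: V) S =
        D V ((V.length + 1 - w : ℤ) :: S) + (q ^ S.length - q ^ w) * D V S}
  zero_mem' := by simp
  add_mem' := fun ⟨h_append, h_cons⟩ ⟨h_append', h_cons'⟩ =>
    ⟨fun V S => by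
      simp only [Pi.add_apply]
      linear_combination h_append V S + h_append' V S,
    fun w V S hS => by
      simp only [Pi.add_apply]
      linear_combination h_cons w V S hS + h_cons' w V S hS⟩
  smul_mem' := fun r D ⟨h_append, h_cons⟩ =>
    ⟨fun V S => by
      simp only [Pi.smul_apply, smul_eq_mul]
      linear_combination r * h_append V S,
    fun w V S hS => by
      simp only [Pi.smul_apply, smul_eq_mul]
      linear_combination r * h_cons w V S hS⟩

/-- The starting index of the last window of a schedule, `V` being its reverse. The default makes
`P_∅` behave as the result of a window of length `1`, so that `w_1 ≤ 2` becomes an instance of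
`w_i ≤ w_{i-1} + 1`. -/
def lastWindowStart (V : List ℕ) : ℤ :=
  V.length - V.headD 1

variable {x q : R} {D : List ℕ → List ℤ → R}

theorem eq_zero_of_forall_le_length (hD : D ∈ transferSpace x q) {V : List ℕ} {m : ℤ}
    (h : ∀ S : List ℤ, (m :: S).Pairwise (· ≤ ·) → (∀ a ∈ S, a ≤ V.length) → D V S = 0)
    {S : List ℤ} (hS : (m :: S).Pairwise (· ≤ ·)) (hSV : ∀ a ∈ S, a ≤ V.length + 1) :
    D V S = 0 := by
  induction S using List.reverseRecOn with
  | nil => exact h [] hS (by simp)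
  | append_singleton S a ih =>
    have hS' := hS
    rw [← List.cons_append, List.pairwise_append] at hS'
    rw [List.forall_mem_append, List.forall_mem_singleton] at hSV
    rcases hSV.2.eq_or_lt with rfl | ha
    · rw [hD.1, ih hS'.1 hSV.1, mul_zero]
    · have ha_le : a ≤ V.length := Int.lt_add_one_iff.1 ha
      refine h _ hS (List.forall_mem_append.2 ⟨fun b hb => ?_, List.forall_mem_singleton.2 ha_le⟩)
      exact (hS'.2.2 b (List.mem_cons_of_mem _ hb) a (List.mem_singleton_self a)).trans ha_le

theorem eq_zero_of_base [NoZeroDivisors R] (hq : q ≠ 1) (hD : D ∈ transferSpace x q)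
    (h_base : ∀ S : List ℤ, ((-1) :: S).Pairwise (· ≤ ·) → (∀ a ∈ S, a ≤ 0) → D [] S = 0)
    {V : List ℕ} (hV : (V ++ [1]).IsChain (fun b a => b ≤ a + 1))
    {S : List ℤ} (hS : (lastWindowStart V :: S).Pairwise (· ≤ ·))
    (hSV : ∀ a ∈ S, a ≤ V.length + 1) :
    D V S = 0 := by
  induction V generalizing S with
  | nil =>
    exact eq_zero_of_forall_le_length hD (V := []) (m := -1) (by simpa using h_base)
      (by simpa [lastWindowStart] using hS) hSV
  | cons w V ih =>
    refine eq_zero_of_forall_le_length hD (fun S hS hSV => ?_) hS hSV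
    have h_le : w ≤ V.headD 1 + 1 := by cases V <;> exact (List.isChain_cons_cons.1 hV).1
    have h_start : lastWindowStart V ≤ V.length + 1 - w := by
      rw [lastWindowStart]
      omega
    have h_cons_start : lastWindowStart (w :: V) = V.length + 1 - w := by simp [lastWindowStart]
    rw [h_cons_start] at hS
    replace hSV : ∀ a ∈ S, a ≤ (V.length + 1 : ℤ) := by simpa using hSV
    have h_cons_sorted : (lastWindowStart V :: (V.length + 1 - w : ℤ) :: S).Pairwise (· ≤ ·) :=
      List.pairwise_cons_cons_iff_of_trans.2 ⟨h_start, hS⟩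
    have h_sorted : (lastWindowStart V :: S).Pairwise (· ≤ ·) :=
      h_cons_sorted.sublist ((List.sublist_cons_self _ S).cons_cons _)
    have h_step := hD.2 w V S hSV
    rw [ih hV.tail h_cons_sorted (List.forall_mem_cons.2 ⟨by omega, hSV⟩),
      ih hV.tail h_sorted hSV, mul_zero, add_zero] at h_step
    exact (mul_eq_zero.1 h_step).resolve_left (sub_ne_zero.2 hq.symm)

end Propagation

section ProductFamilies

variable {R : Type*} [CommRing R]

/-- The product `∏ [w_i]_q` over a schedule. -/
def scheduleProd (q : R) (V : List ℕ) : R :=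
  (V.map fun w => ∑ i ∈ range w, q ^ i).prod

/-- The family through which `x ^ k * ∏ [w_i]_q` enters the functional equation, multiplied by
`x`. -/
def weightedProdFamily (x q : R) (V : List ℕ) (S : List ℤ) : R :=
  x ^ (V.length + 2) * scheduleProd q V * scalingKernel x q 1 (windowWeight q (V.length + 1)) S 1

/-- The family through which `∏ [w_i]_q` enters the functional equation. -/
def constantProdFamily (x q : R) (V : List ℕ) (S : List ℤ) : R :=
  scheduleProd q V * scalingKernel x q 1 (1 : ℤ → R) S 1

theorem one_sub_mul_scheduleProd_cons (q : R) (w : ℕ) (V : List ℕ) :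
    (1 - q) * scheduleProd q (w :: V) = (1 - q ^ w) * scheduleProd q V := by
  rw [scheduleProd, List.map_cons, List.prod_cons, ← mul_assoc, mul_neg_geom_sum, scheduleProd]

theorem weightedProdFamily_mem_transferSpace (x q : R) :
    weightedProdFamily x q ∈ transferSpace x q := by
  refine ⟨fun V S => ?_, fun w V S hS => ?_⟩
  · rw [weightedProdFamily, scalingKernel_append_singleton_of_smul_eq x q
      (by rw [one_smul, windowWeight_self, Pi.one_apply]), weightedProdFamily]
    simp only [Pi.one_apply, one_mul, smul_eq_mul]
    ring
  · have h_prod := one_sub_mul_scheduleProd_cons q w V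
    simp only [weightedProdFamily, List.length_cons, Nat.cast_add, Nat.cast_one,
      scalingKernel_one_windowWeight_add_one x q hS,
      scalingKernel_cons, windowWeight_sub_natCast, Pi.one_apply, smul_eq_mul, one_mul, mul_one]
    linear_combination x ^ (V.length + 3) *
      scalingKernel x q 1 (windowWeight q (V.length + 1)) S q * h_prod

theorem constantProdFamily_mem_transferSpace (x q : R) :
    constantProdFamily x q ∈ transferSpace x q := by
  refine ⟨fun V S => ?_, fun w V S _ => ?_⟩
  · rw [constantProdFamily, scalingKernel_append_singleton_of_smul_eq x q (by simp),
      constantProdFamily]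
    simp only [Pi.one_apply, one_mul, smul_eq_mul]
    ring
  · simp only [constantProdFamily, scalingKernel_cons, Pi.one_apply, smul_eq_mul, mul_one]
    linear_combination scalingKernel x q 1 (1 : ℤ → R) S 1 * one_sub_mul_scheduleProd_cons q w V

end ProductFamilies

section EvaluationFamilies

variable {F : Type*} [Field F]

/-- The family through which `Q_W(x;q)` enters the functional equation: `P_W`, acted on by the
kernel of the window scalings, at the point `(x, x, …)`. -/
def directFamily (x q : F) (V : List ℕ) (S : List ℤ) : F :=
  orbitEval q V (fun _ => x) (scalingKernel x q 1 (suffixOperator q) S 1)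

/-- The family through which `x ^ k * Q_W(1/x;q)` enters the functional equation, multiplied by
`x`. Here the window scalings are the variables `t` of the kernel and their weights the
variables `u`. -/
def invertedFamily (x q : F) (V : List ℕ) (S : List ℤ) : F :=
  x ^ (V.length + 2) * orbitEval q V (fun _ => x⁻¹)
    (scalingKernel x q (suffixOperator q)
      (algebraMap F (MonoidAlgebra F (ℤ → F)) ∘ windowWeight q (V.length + 1)) S 1)

theorem orbitEval_eq_of_suffixOperator_sub_one_dvd {q : F} {V : List ℕ} {a : ℤ} (h : V.length < a)
    (ρ : ℤ → F) {κ κ' : MonoidAlgebra F (ℤ → F)} (h_dvd : suffixOperator q a - 1 ∣ κ - κ') :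
    orbitEval q V ρ κ = orbitEval q V ρ κ' := by
  obtain ⟨E, hE⟩ := h_dvd
  rw [← sub_eq_zero, ← map_sub, hE, sub_mul, one_mul, map_sub,
    orbitEval_suffixOperator_mul q h, sub_self]

theorem directFamily_mem_transferSpace (x : F) {q : F} (hq : q ≠ 1) :
    directFamily x q ∈ transferSpace x q := by
  refine ⟨fun V S => ?_, fun w V S hS => ?_⟩
  · have h_dvd := sub_smul_dvd_scalingKernel_append_singleton_sub x q
      (t := (1 : ℤ → MonoidAlgebra F (ℤ → F))) (u := suffixOperator q) S (V.length + 1) 1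
    rw [one_smul, Pi.one_apply, one_mul, ← neg_sub, neg_dvd] at h_dvd
    rw [directFamily, directFamily,
      orbitEval_eq_of_suffixOperator_sub_one_dvd (by simp) _ h_dvd, map_smul, smul_eq_mul]
  · simp only [directFamily]
    rw [orbitEval_cons hq, scalingTwist_scalingKernel_one_suffixOperator x q hS,
      scalingKernel_cons]
    simp only [one_smul, Pi.one_apply, sub_mul, one_mul, smul_mul_assoc, map_add, map_sub,
      map_smul, smul_eq_mul]
    ring

theorem invertedFamily_mem_transferSpace {x q : F} (hx : x ≠ 0) (hq : q ≠ 1) :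
    invertedFamily x q ∈ transferSpace x q := by
  refine ⟨fun V S => ?_, fun w V S hS => ?_⟩
  · have h_dvd := sub_smul_dvd_scalingKernel_append_singleton_sub x q (t := suffixOperator q)
      (u := algebraMap F _ ∘ windowWeight q (V.length + 1)) S (V.length + 1) 1
    rw [one_smul, Function.comp_apply, windowWeight_self, map_one] at h_dvd
    rw [invertedFamily, invertedFamily,
      orbitEval_eq_of_suffixOperator_sub_one_dvd (by simp) _ h_dvd, map_smul, smul_eq_mul,
      orbitEval_suffixOperator_mul q (by simp)]
    ring
  · have h_twist := scalingTwist_scalingKernel_suffixOperator x q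
      (windowWeight q (V.length + 1)) hS 1
    have h_cons := orbitEval_cons hq w V (fun _ => x⁻¹) (scalingKernel x q (suffixOperator q)
      (algebraMap F _ ∘ windowWeight q (V.length + 1 + 1)) S 1)
    rw [scalingKernel_windowWeight_add_one x q _ hS, h_twist] at h_cons
    simp only [invertedFamily, List.length_cons, Nat.cast_add, Nat.cast_one,
      scalingKernel_windowWeight_add_one x q _ hS]
    have h_pow : x ^ (V.length + 1 + 2) * x⁻¹ = x ^ (V.length + 2) := by
      rw [add_right_comm, pow_succ, mul_inv_cancel_right₀ hx]
    rw [mul_left_comm, h_cons, mul_add, ← mul_assoc, h_pow, scalingKernel_cons]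
    simp only [one_smul, Function.comp_apply, windowWeight_sub_natCast,
      Algebra.algebraMap_eq_smul_one, sub_mul, one_mul, mul_smul_comm, smul_mul_assoc, map_add,
      map_sub, map_smul, smul_eq_mul, mul_one]
    ring

theorem directFamily_nil (x q : F) {S : List ℤ} (hS : ∀ a ∈ S, -1 ≤ a ∧ a ≤ 0) :
    directFamily x q [] S =
      x * (q * scalingKernel x q 1 (windowWeight q 0) S 1 +
        scalingKernel x q 1 (1 : ℤ → F) S q) := by
  have h_neg_one : scalingCharacter F (-1) (scalingKernel x q 1 (suffixOperator q) S 1) =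
      scalingKernel x q 1 (windowWeight q 0) S 1 := by
    rw [map_scalingKernel]
    refine scalingKernel_congr x q (fun _ _ => map_one _) (fun a ha => ?_) 1
    rw [Function.comp_apply, scalingCharacter_suffixOperator,
      suffixScaling_apply_neg_one q (hS a ha).1 (hS a ha).2]
  have h_zero : scalingCharacter F 0 (scalingKernel x q 1 (suffixOperator q) S 1) =
      scalingKernel x q 1 (1 : ℤ → F) S q := by
    rw [map_scalingKernel, ← mul_one q, ← scalingKernel_smul_right, mul_one]
    refine scalingKernel_congr x q (fun _ _ => map_one _) (fun a ha => ?_) 1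
    simp [scalingCharacter_suffixOperator, suffixScaling_of_le q (hS a ha).2]
  rw [directFamily, orbitEval_nil, h_neg_one, h_zero]
  ring

theorem invertedFamily_nil {x : F} (hx : x ≠ 0) (q : F) {S : List ℤ}
    (hS : ∀ a ∈ S, -1 ≤ a ∧ a ≤ 0) :
    invertedFamily x q [] S =
      x * (q * (S.map (windowWeight q 0)).prod * scalingKernel x q 1 (1 : ℤ → F) S q +
        q ^ S.length * scalingKernel x q 1 (windowWeight q 0) S 1) := by
  have h_neg_one : scalingCharacter F (-1) (scalingKernel x q (suffixOperator q)
      (algebraMap F _ ∘ windowWeight q 0) S q) =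
      (S.map (windowWeight q 0)).prod * scalingKernel x q 1 (1 : ℤ → F) S q := by
    rw [map_scalingKernel, ← scalingKernel_mul_mul, mul_one]
    refine scalingKernel_congr x q (fun a ha => ?_) (fun a _ => AlgHom.commutes _ _) q
    rw [Function.comp_apply, scalingCharacter_suffixOperator,
      suffixScaling_apply_neg_one q (hS a ha).1 (hS a ha).2]
  have h_zero : scalingCharacter F 0 (scalingKernel x q (suffixOperator q)
      (algebraMap F _ ∘ windowWeight q 0) S q) =
      q ^ S.length * scalingKernel x q 1 (windowWeight q 0) S 1 := by
    rw [map_scalingKernel, ← smul_eq_mul, ← scalingKernel_smul_smul, ← mul_one q,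
      ← scalingKernel_smul_right, mul_one]
    refine scalingKernel_congr x q (fun a ha => ?_)
      (fun a _ => congrArg (q * ·) ((scalingCharacter F 0).commutes _)) 1
    simp [scalingCharacter_suffixOperator, suffixScaling_of_le q (hS a ha).2]
  have h_kernel := scalingKernel_windowWeight_add_one x q (suffixOperator q)
    (fun a ha => (hS a ha).2) 1
  rw [mul_one] at h_kernel
  rw [invertedFamily, List.length_nil, Nat.cast_zero, h_kernel, orbitEval_nil, h_neg_one, h_zero]
  field_simp

end EvaluationFamilies

section FunctionalEquation

variable {F : Type*} [Field F]

/-- `x` times the difference of the two sides of the functional equation, extended to all lists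
of window starts; the schedules themselves correspond to `S = []`. -/
def tamenessDefect (x q : F) : List ℕ → List ℤ → F :=
  (x - q) • directFamily x q + (1 - q * x) • invertedFamily x q -
    (1 - q ^ 2) • (weightedProdFamily x q + x • constantProdFamily x q)

theorem tamenessDefect_mem_transferSpace {x q : F} (hx : x ≠ 0) (hq : q ≠ 1) :
    tamenessDefect x q ∈ transferSpace x q :=
  sub_mem
    (add_mem (Submodule.smul_mem _ _ (directFamily_mem_transferSpace x hq))
      (Submodule.smul_mem _ _ (invertedFamily_mem_transferSpace hx hq)))
    (Submodule.smul_mem _ _ (add_mem (weightedProdFamily_mem_transferSpace x q)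
      (Submodule.smul_mem _ _ (constantProdFamily_mem_transferSpace x q))))

theorem tamenessDefect_nil {x : F} (hx : x ≠ 0) (q : F) {S : List ℤ}
    (hS : ((-1) :: S).Pairwise (· ≤ ·)) (hS0 : ∀ a ∈ S, a ≤ 0) : tamenessDefect x q [] S = 0 := by
  have h_range : ∀ a ∈ S, -1 ≤ a ∧ a ≤ 0 := fun a ha =>
    ⟨(List.pairwise_cons.1 hS).1 a ha, hS0 a ha⟩
  have h_weighted : weightedProdFamily x q [] S =
      x ^ 2 * scalingKernel x q 1 (windowWeight q 0) S q := by
    simpa [weightedProdFamily, scheduleProd, hx] using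
      scalingKernel_one_windowWeight_add_one x q hS0 1
  have h_constant : constantProdFamily x q [] S = scalingKernel x q 1 (1 : ℤ → F) S 1 := by
    simp [constantProdFamily, scheduleProd]
  simp only [tamenessDefect, Pi.sub_apply, Pi.add_apply, Pi.smul_apply, smul_eq_mul,
    directFamily_nil x q h_range, invertedFamily_nil hx q h_range, h_weighted, h_constant]
  linear_combination x * scalingKernel_base_identity x q hS hS0

theorem tamenessDefect_apply_nil (x q : F) (V : List ℕ) :
    tamenessDefect x q V [] =
      (x - q) * scheduleEval q V (fun _ => x) +
        x ^ (V.length + 2) * (1 - q * x) * scheduleEval q V (fun _ => x⁻¹) -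
        (1 - q ^ 2) * (x ^ (V.length + 2) + x) * scheduleProd q V := by
  simp only [tamenessDefect, Pi.sub_apply, Pi.add_apply, Pi.smul_apply, smul_eq_mul, directFamily,
    invertedFamily, weightedProdFamily, constantProdFamily, scalingKernel, orbitEval_one]
  ring

theorem qq_ne_one : qq ≠ 1 := by
  rw [qq, ← RatFunc.algebraMap_X, ← map_one (algebraMap ℚ[X] (RatFunc ℚ))]
  exact (RatFunc.algebraMap_injective ℚ).ne fun h => by simpa using congrArg natDegree h

theorem Legal.isChain_one_cons {W : List ℕ} (hW : Legal W) :
    (1 :: W).IsChain fun a b => b ≤ a + 1 := by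
  refine List.isChain_cons.2 ⟨fun w hw => ?_, hW.2.imp fun _ _ h => h.2⟩
  obtain ⟨W', rfl⟩ := List.head?_eq_some_iff.1 hw
  exact (hW.1 (List.cons_ne_nil w W')).2

theorem stmt18_general {F : Type*} [Field F] {q x : F} (hq : q ≠ 1) (hx : x ≠ 0) {W : List ℕ}
    (hW : (1 :: W).IsChain fun a b => b ≤ a + 1) :
    (1 - q / x) * scheduleEval q W.reverse (fun _ => x) +
        x ^ (W.length + 1) * (1 - q * x) * scheduleEval q W.reverse (fun _ => x⁻¹) =
      (1 + x ^ (W.length + 1)) *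
        ((1 - q ^ 2) * (W.map fun w => ∑ i ∈ range w, q ^ i).prod) := by
  have h_chain : (W.reverse ++ [1]).IsChain fun b a => b ≤ a + 1 := by
    rw [← List.reverse_cons]
    exact List.isChain_reverse.2 hW
  have h_defect : tamenessDefect x q W.reverse [] = 0 :=
    eq_zero_of_base hq (tamenessDefect_mem_transferSpace hx hq)
      (fun _ hS hS0 => tamenessDefect_nil hx q hS hS0) h_chain (by simp) (by simp)
  rw [tamenessDefect_apply_nil, scheduleProd, List.map_reverse, List.prod_reverse,
    List.length_reverse] at h_defect
  refine mul_left_cancel₀ hx ?_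
  linear_combination h_defect - q * scheduleEval q W.reverse (fun _ => x) * mul_inv_cancel₀ hx

end FunctionalEquation

/-- Main theorem: every legal schedule is tame, i.e. Q_W satisfies
(1-q/x)Q_W(x;q) + x^k(1-qx)Q_W(1/x;q) = (1+x^k)(1-q²)∏[w_i]_q. -/
theorem stmt18 (W : List ℕ) (hW : Legal W) : TameFE qq W := by
  intro x hx
  rw [eval_Qsched, eval_Qsched]
  exact stmt18_general qq_ne_one hx hW.isChain_one_cons

end
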